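/- arXiv:2008.01155 — 2 statements merged into one kernel-verified Lean document; each statement's English description precedes it below -/
import Mathlib

section
/- (Pathwise version of Proposition A.3, converse direction.) Let B : [0,∞) → ℝ be continuous with B(0) = 0, and let Z : [0,∞) → ℝ be a continuous function satisfying Z = B ∘ (σ₊² P₊^Z + σ₋² P₋^Z) and P₊^Z(θ) + P₋^Z(θ) = θ for every θ ≥ 0. Then Θ := σ₊⁻² P₊^B + σ₋⁻² P₋^B is continuous and strictly increasing with a continuous inverse Θ⁻¹ defined on [0,∞), and Z = B ∘ Θ⁻¹, i.e. Z is a two-speed Brownian path built from B. -/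
open MeasureTheory Set Filter

/-- Occupation time of the positive half-line: `P₊^f(t) = ∫₀^t 1{f(s) > 0} ds`. -/
noncomputable def occPos (f : ℝ → ℝ) (t : ℝ) : ℝ :=
  ∫ s in (0:ℝ)..t, Set.indicator {u : ℝ | 0 < f u} (fun _ => (1:ℝ)) s

/-- Occupation time of the negative half-line: `P₋^f(t) = ∫₀^t 1{f(s) < 0} ds`. -/
noncomputable def occNeg (f : ℝ → ℝ) (t : ℝ) : ℝ :=
  ∫ s in (0:ℝ)..t, Set.indicator {u : ℝ | f u < 0} (fun _ => (1:ℝ)) s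

/-!
The function `Φ = σ₊² P₊^Z + σ₋² P₋^Z` has speed `σ₊²` while `Z > 0` and `σ₋²` otherwise, so it is
an order isomorphism carrying the measure `Φ'(s) ds` to Lebesgue measure. Substituting `u = Φ(s)`
in `P₊^B(Φ(θ)) = ∫₀^{Φ(θ)} 1{B(u) > 0} du` and using `B ∘ Φ = Z` gives `P₊^B ∘ Φ = σ₊² P₊^Z`, and
likewise `P₋^B ∘ Φ = σ₋² P₋^Z`. Hence `Θ ∘ Φ = P₊^Z + P₋^Z` is the identity on `[0,∞)`, that is,
`Θ = Φ⁻¹` there.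
-/

section Primitive

variable {g : ℝ → ℝ} {c : ℝ}

lemma mul_sub_le_integral_of_ae_le (hg : ∀ a b, IntervalIntegrable g volume a b)
    (hcg : ∀ᵐ s, c ≤ g s) {a b : ℝ} (hab : a ≤ b) : c * (b - a) ≤ ∫ s in a..b, g s :=
  calc c * (b - a) = ∫ _ in a..b, c := by
        rw [intervalIntegral.integral_const, smul_eq_mul, mul_comm]
    _ ≤ ∫ s in a..b, g s :=
        intervalIntegral.integral_mono_ae hab intervalIntegrable_const (hg a b) hcg

lemma strictMono_primitive_of_ae_le (hg : ∀ a b, IntervalIntegrable g volume a b) (hc : 0 < c)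
    (hcg : ∀ᵐ s, c ≤ g s) : StrictMono fun t => ∫ s in (0 : ℝ)..t, g s := by
  intro a b hab
  refine sub_pos.1 ?_
  rw [intervalIntegral.integral_interval_sub_left (hg 0 b) (hg 0 a)]
  exact (mul_pos hc (sub_pos.2 hab)).trans_le (mul_sub_le_integral_of_ae_le hg hcg hab.le)

lemma surjective_primitive_of_ae_le (hg : ∀ a b, IntervalIntegrable g volume a b) (hc : 0 < c)
    (hcg : ∀ᵐ s, c ≤ g s) : Function.Surjective fun t => ∫ s in (0 : ℝ)..t, g s := by
  refine (intervalIntegral.continuous_primitive hg 0).surjective ?_ ?_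
  · refine tendsto_atTop_mono' atTop ?_ (tendsto_id.const_mul_atTop hc)
    filter_upwards [eventually_ge_atTop 0] with t ht
    simpa using mul_sub_le_integral_of_ae_le hg hcg ht
  · refine tendsto_atBot_mono' atBot ?_ (tendsto_id.const_mul_atBot hc)
    filter_upwards [eventually_le_atBot 0] with t ht
    have hlower := mul_sub_le_integral_of_ae_le hg hcg ht
    rw [intervalIntegral.integral_symm, id]
    linarith

/-- The primitive `t ↦ ∫₀ᵗ g` of a function bounded below by a positive constant, as an order
isomorphism of the line; it serves as a time change running at speed `g`. -/
noncomputable def primitiveOrderIso (hg : ∀ a b, IntervalIntegrable g volume a b) (hc : 0 < c)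
    (hcg : ∀ᵐ s, c ≤ g s) : ℝ ≃o ℝ :=
  (strictMono_primitive_of_ae_le hg hc hcg).orderIsoOfSurjective _
    (surjective_primitive_of_ae_le hg hc hcg)

lemma primitiveOrderIso_apply (hg : ∀ a b, IntervalIntegrable g volume a b) (hc : 0 < c)
    (hcg : ∀ᵐ s, c ≤ g s) (t : ℝ) :
    primitiveOrderIso hg hc hcg t = ∫ s in (0 : ℝ)..t, g s :=
  rfl

end Primitive

section ChangeOfVariables

variable {g : ℝ → ℝ} {φ : ℝ ≃o ℝ}

lemma measurePreserving_withDensity_of_integral_eq_sub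
    (hg : ∀ a b, IntervalIntegrable g volume a b) (hg0 : 0 ≤ᵐ[volume] g)
    (hφ : ∀ a b, ∫ s in a..b, g s = φ b - φ a) :
    MeasurePreserving φ (volume.withDensity fun s => ENNReal.ofReal (g s)) volume := by
  refine ⟨φ.continuous.measurable, (Measure.ext_of_Ioc _ _ fun a b hab => ?_).symm⟩
  have hab' : φ.symm a ≤ φ.symm b := φ.symm.monotone hab.le
  rw [Measure.map_apply φ.continuous.measurable measurableSet_Ioc, φ.preimage_Ioc,
    withDensity_apply _ measurableSet_Ioc,
    ← ofReal_integral_eq_lintegral_ofReal (hg _ _).1 (ae_restrict_of_ae hg0),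
    ← intervalIntegral.integral_of_le hab', hφ, φ.apply_symm_apply, φ.apply_symm_apply,
    Real.volume_Ioc]

lemma intervalIntegral_smul_comp_of_integral_eq_sub
    (hg : ∀ a b, IntervalIntegrable g volume a b) (hg0 : 0 ≤ᵐ[volume] g)
    (hφ : ∀ a b, ∫ s in a..b, g s = φ b - φ a) {E : Type*} [NormedAddCommGroup E]
    [NormedSpace ℝ E] (h : ℝ → E) (a b : ℝ) :
    ∫ s in a..b, g s • h (φ s) = ∫ u in φ a..φ b, h u := by
  have hIoc (a b : ℝ) : ∫ s in Ioc a b, g s • h (φ s) = ∫ u in Ioc (φ a) (φ b), h u := by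
    have hpre : φ ⁻¹' Ioc (φ a) (φ b) = Ioc a b := by simp
    have hmp := measurePreserving_withDensity_of_integral_eq_sub hg hg0 hφ
    rw [← hmp.setIntegral_preimage_emb φ.toHomeomorph.measurableEmbedding h, hpre,
      setIntegral_withDensity_eq_setIntegral_toReal_smul₀ (hg a b).1.aemeasurable.ennreal_ofReal
        (ae_of_all _ fun _ => ENNReal.ofReal_lt_top) _ measurableSet_Ioc]
    refine integral_congr_ae ?_
    filter_upwards [ae_restrict_of_ae hg0] with s hs
    rw [ENNReal.toReal_ofReal hs]
  simp only [intervalIntegral, hIoc]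

end ChangeOfVariables

lemma occNeg_eq_occPos_neg (f : ℝ → ℝ) : occNeg f = occPos (-f) := by
  funext t
  simp only [occNeg, occPos, Pi.neg_apply, Left.neg_pos_iff]

lemma occPos_congr {f₁ f₂ : ℝ → ℝ} {t : ℝ} (h : EqOn f₁ f₂ (uIcc 0 t)) :
    occPos f₁ t = occPos f₂ t :=
  intervalIntegral.integral_congr fun s hs => by simp only [indicator, mem_ofPred_eq, h hs]

lemma occNeg_congr {f₁ f₂ : ℝ → ℝ} {t : ℝ} (h : EqOn f₁ f₂ (uIcc 0 t)) :
    occNeg f₁ t = occNeg f₂ t := by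
  rw [occNeg_eq_occPos_neg, occNeg_eq_occPos_neg]
  exact occPos_congr fun s hs => congrArg Neg.neg (h hs)

lemma intervalIntegrable_indicator_pos {f : ℝ → ℝ} (hf : AEMeasurable f) (a b : ℝ) :
    IntervalIntegrable ({u | 0 < f u}.indicator fun _ => (1 : ℝ)) volume a b := by
  have hpos : NullMeasurableSet {u | 0 < f u} := nullMeasurableSet_lt aemeasurable_const hf
  refine (intervalIntegrable_const (c := (1 : ℝ))).mono_fun
    (aestronglyMeasurable_const.indicator₀ hpos).restrict (ae_of_all _ fun s => ?_)
  exact norm_indicator_le_norm_self (fun _ => (1 : ℝ)) s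

/-- The speed of the clock attached to a path `f`: it is `p` while `f` is positive and `m`
otherwise. Assigning `m` to the zeros of `f` makes the speed positive everywhere. -/
noncomputable def twoSpeed (p m : ℝ) (f : ℝ → ℝ) (s : ℝ) : ℝ :=
  m + (p - m) * {u | 0 < f u}.indicator (fun _ => (1 : ℝ)) s

section TwoSpeed

variable {p m : ℝ} {f : ℝ → ℝ} {s : ℝ}

lemma twoSpeed_of_pos (hs : 0 < f s) : twoSpeed p m f s = p := by
  simp [twoSpeed, hs]

lemma twoSpeed_of_nonpos (hs : f s ≤ 0) : twoSpeed p m f s = m := by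
  simp [twoSpeed, hs.not_gt]

lemma min_le_twoSpeed (p m : ℝ) (f : ℝ → ℝ) (s : ℝ) : min p m ≤ twoSpeed p m f s := by
  rcases lt_or_ge 0 (f s) with hs | hs
  · exact (min_le_left p m).trans_eq (twoSpeed_of_pos hs).symm
  · exact (min_le_right p m).trans_eq (twoSpeed_of_nonpos hs).symm

lemma intervalIntegrable_twoSpeed (p m : ℝ) (hf : AEMeasurable f) (a b : ℝ) :
    IntervalIntegrable (twoSpeed p m f) volume a b :=
  intervalIntegrable_const.add ((intervalIntegrable_indicator_pos hf a b).const_mul _)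

lemma integral_twoSpeed (p m : ℝ) (hf : AEMeasurable f) (t : ℝ) :
    ∫ s in (0 : ℝ)..t, twoSpeed p m f s = p * occPos f t + m * (t - occPos f t) := by
  simp only [twoSpeed]
  rw [intervalIntegral.integral_add intervalIntegrable_const
      ((intervalIntegrable_indicator_pos hf 0 t).const_mul _),
    intervalIntegral.integral_const, intervalIntegral.integral_const_mul, ← occPos, smul_eq_mul]
  ring

/-- The time change with speed `twoSpeed p m f`, that is `t ↦ p * occPos f t + m * occNeg f t` when
`f` spends no time at zero. -/
noncomputable def twoSpeedClock (hp : 0 < p) (hm : 0 < m) (hf : AEMeasurable f) : ℝ ≃o ℝ :=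
  primitiveOrderIso (intervalIntegrable_twoSpeed p m hf) (lt_min hp hm)
    (ae_of_all _ (min_le_twoSpeed p m f))

section Clock

variable (hp : 0 < p) (hm : 0 < m) (hf : AEMeasurable f) {B : ℝ → ℝ} {t : ℝ}

lemma integral_twoSpeed_eq_twoSpeedClock_sub (a b : ℝ) :
    ∫ s in a..b, twoSpeed p m f s = twoSpeedClock hp hm hf b - twoSpeedClock hp hm hf a :=
  (intervalIntegral.integral_interval_sub_left (intervalIntegrable_twoSpeed p m hf 0 b)
    (intervalIntegrable_twoSpeed p m hf 0 a)).symm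

lemma twoSpeedClock_zero : twoSpeedClock hp hm hf 0 = 0 :=
  intervalIntegral.integral_same

lemma twoSpeedClock_apply (ht : occPos f t + occNeg f t = t) :
    twoSpeedClock hp hm hf t = p * occPos f t + m * occNeg f t := by
  rw [twoSpeedClock, primitiveOrderIso_apply, integral_twoSpeed p m hf, sub_eq_of_eq_add' ht.symm]

lemma occPos_twoSpeedClock_of_eq_comp {h : ℝ → ℝ} {k : ℝ}
    (hB : ∀ s ∈ uIcc 0 t, h s = B (twoSpeedClock hp hm hf s))
    (hk : ∀ s, 0 < h s → twoSpeed p m f s = k) :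
    occPos B (twoSpeedClock hp hm hf t) = k * occPos h t := by
  have hspeed : 0 ≤ᵐ[volume] twoSpeed p m f :=
    ae_of_all _ fun s => (lt_min hp hm).le.trans (min_le_twoSpeed p m f s)
  set φ := twoSpeedClock hp hm hf
  calc occPos B (φ t) = ∫ u in φ 0..φ t, {u | 0 < B u}.indicator (fun _ => (1 : ℝ)) u := by
        rw [twoSpeedClock_zero, occPos]
    _ = ∫ s in (0 : ℝ)..t, twoSpeed p m f s • {u | 0 < B u}.indicator (fun _ => (1 : ℝ)) (φ s) :=
        (intervalIntegral_smul_comp_of_integral_eq_sub (intervalIntegrable_twoSpeed p m hf) hspeed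
          (integral_twoSpeed_eq_twoSpeedClock_sub hp hm hf) _ 0 t).symm
    _ = ∫ s in (0 : ℝ)..t, k * {u | 0 < h u}.indicator (fun _ => (1 : ℝ)) s := by
        refine intervalIntegral.integral_congr fun s hs => ?_
        by_cases hpos : 0 < h s
        · simp [indicator, ← hB s hs, hpos, hk s hpos]
        · simp [indicator, ← hB s hs, hpos]
    _ = k * occPos h t := intervalIntegral.integral_const_mul _ _

lemma occPos_twoSpeedClock (hfB : ∀ s ∈ uIcc 0 t, f s = B (twoSpeedClock hp hm hf s)) :
    occPos B (twoSpeedClock hp hm hf t) = p * occPos f t :=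
  occPos_twoSpeedClock_of_eq_comp hp hm hf hfB fun _ => twoSpeed_of_pos

lemma occNeg_twoSpeedClock (hfB : ∀ s ∈ uIcc 0 t, f s = B (twoSpeedClock hp hm hf s)) :
    occNeg B (twoSpeedClock hp hm hf t) = m * occNeg f t := by
  rw [occNeg_eq_occPos_neg, occNeg_eq_occPos_neg]
  refine occPos_twoSpeedClock_of_eq_comp hp hm hf (fun s hs => congrArg Neg.neg (hfB s hs))
    fun s hs => twoSpeed_of_nonpos ?_
  exact (neg_pos.1 hs).le

lemma inv_mul_occPos_add_inv_mul_occNeg_twoSpeedClock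
    (hfB : ∀ s ∈ uIcc 0 t, f s = B (twoSpeedClock hp hm hf s))
    (ht : occPos f t + occNeg f t = t) :
    p⁻¹ * occPos B (twoSpeedClock hp hm hf t) + m⁻¹ * occNeg B (twoSpeedClock hp hm hf t) = t := by
  rw [occPos_twoSpeedClock hp hm hf hfB, occNeg_twoSpeedClock hp hm hf hfB,
    inv_mul_cancel_left₀ hp.ne', inv_mul_cancel_left₀ hm.ne', ht]

end Clock

end TwoSpeed

lemma exists_orderIso_eq_comp_and_leftInverse {p m : ℝ} (hp : 0 < p) (hm : 0 < m) {B Z : ℝ → ℝ}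
    (hZ : AEMeasurable Z (volume.restrict (Ici 0)))
    (hrep : ∀ θ ∈ Ici (0 : ℝ), Z θ = B (p * occPos Z θ + m * occNeg Z θ))
    (hocc : ∀ θ ∈ Ici (0 : ℝ), occPos Z θ + occNeg Z θ = θ) :
    ∃ φ : ℝ ≃o ℝ, φ 0 = 0 ∧ (∀ θ ∈ Ici (0 : ℝ), Z θ = B (φ θ)) ∧
      ∀ θ ∈ Ici (0 : ℝ), p⁻¹ * occPos B (φ θ) + m⁻¹ * occNeg B (φ θ) = θ := by
  -- The clock needs a speed on the whole line, while `Z` is only controlled on `[0,∞)`.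
  set Z₀ : ℝ → ℝ := (Ici 0).indicator Z
  have hZ₀ : AEMeasurable Z₀ := (aemeasurable_indicator_iff measurableSet_Ici).2 hZ
  have hZ₀_eq : EqOn Z₀ Z (Ici 0) := eqOn_indicator
  have huIcc {θ : ℝ} (hθ : θ ∈ Ici 0) : uIcc 0 θ ⊆ Ici 0 := by
    rw [uIcc_of_le hθ]
    exact Icc_subset_Ici_self
  have hpos {θ : ℝ} (hθ : θ ∈ Ici 0) : occPos Z₀ θ = occPos Z θ :=
    occPos_congr (hZ₀_eq.mono (huIcc hθ))
  have hneg {θ : ℝ} (hθ : θ ∈ Ici 0) : occNeg Z₀ θ = occNeg Z θ :=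
    occNeg_congr (hZ₀_eq.mono (huIcc hθ))
  have hocc₀ {θ : ℝ} (hθ : θ ∈ Ici 0) : occPos Z₀ θ + occNeg Z₀ θ = θ := by
    rw [hpos hθ, hneg hθ, hocc θ hθ]
  have hZB (θ : ℝ) (hθ : θ ∈ Ici 0) : Z θ = B (twoSpeedClock hp hm hZ₀ θ) := by
    rw [twoSpeedClock_apply hp hm hZ₀ (hocc₀ hθ), hpos hθ, hneg hθ, hrep θ hθ]
  refine ⟨twoSpeedClock hp hm hZ₀, twoSpeedClock_zero hp hm hZ₀, hZB, fun θ hθ => ?_⟩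
  refine inv_mul_occPos_add_inv_mul_occNeg_twoSpeedClock hp hm hZ₀ (fun s hs => ?_) (hocc₀ hθ)
  rw [hZ₀_eq (huIcc hθ hs), hZB s (huIcc hθ hs)]

theorem two_speed_brownian_path_converse_general
    (σp σm : ℝ) (hσp : σp ≠ 0) (hσm : σm ≠ 0) (B Z : ℝ → ℝ)
    (hZ : AEMeasurable Z (volume.restrict (Ici 0)))
    (hrep : ∀ θ ∈ Ici (0 : ℝ), Z θ = B (σp ^ 2 * occPos Z θ + σm ^ 2 * occNeg Z θ))
    (hocc : ∀ θ ∈ Ici (0 : ℝ), occPos Z θ + occNeg Z θ = θ) :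
    ∃ Θ Tinv : ℝ → ℝ,
      (∀ t : ℝ, Θ t = (σp ^ 2)⁻¹ * occPos B t + (σm ^ 2)⁻¹ * occNeg B t) ∧
      ContinuousOn Θ (Ici 0) ∧
      StrictMonoOn Θ (Ici 0) ∧
      ContinuousOn Tinv (Ici 0) ∧
      MapsTo Tinv (Ici 0) (Ici 0) ∧
      (∀ t ∈ Ici (0 : ℝ), Tinv (Θ t) = t) ∧
      (∀ θ ∈ Ici (0 : ℝ), Θ (Tinv θ) = θ) ∧
      (∀ θ ∈ Ici (0 : ℝ), Z θ = B (Tinv θ)) := by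
  obtain ⟨φ, hφ0, hZB, hΘφ⟩ := exists_orderIso_eq_comp_and_leftInverse
    (sq_pos_of_ne_zero hσp) (sq_pos_of_ne_zero hσm) hZ hrep hocc
  set Θ : ℝ → ℝ := fun t => (σp ^ 2)⁻¹ * occPos B t + (σm ^ 2)⁻¹ * occNeg B t
  have hφ : MapsTo φ (Ici 0) (Ici 0) := fun t ht => hφ0.symm.trans_le (φ.monotone ht)
  have hsymm : MapsTo φ.symm (Ici 0) (Ici 0) := fun t ht =>
    (φ.symm_apply_eq.2 hφ0.symm).symm.trans_le (φ.symm.monotone ht)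
  have hΘ : EqOn φ.symm Θ (Ici 0) := fun t ht => by
    rw [← hΘφ _ (hsymm ht), φ.apply_symm_apply]
  exact ⟨Θ, φ, fun _ => rfl, φ.symm.continuous.continuousOn.congr hΘ.symm,
    (φ.symm.strictMono.strictMonoOn _).congr hΘ, φ.continuous.continuousOn, hφ,
    fun t ht => by rw [← hΘ ht, φ.apply_symm_apply], hΘφ, hZB⟩

/-- Pathwise version of Proposition A.3, converse direction: if a continuous path `Z`
satisfies `Z = B ∘ (σ₊² P₊^Z + σ₋² P₋^Z)` and `P₊^Z(θ) + P₋^Z(θ) = θ` for all `θ ≥ 0`,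
then `Θ = σ₊⁻² P₊^B + σ₋⁻² P₋^B` is continuous and strictly increasing with a continuous
inverse `Tinv` on `[0,∞)`, and `Z = B ∘ Tinv`, i.e. `Z` is a two-speed Brownian path
built from `B`. -/
theorem two_speed_brownian_path_converse
    (σp σm : ℝ) (hσp : 0 < σp) (hσm : 0 < σm)
    (B : ℝ → ℝ) (hB : ContinuousOn B (Set.Ici 0)) (hB0 : B 0 = 0)
    (Z : ℝ → ℝ) (hZ : ContinuousOn Z (Set.Ici 0))
    (hrep : ∀ θ ∈ Set.Ici (0:ℝ),
      Z θ = B (σp ^ 2 * occPos Z θ + σm ^ 2 * occNeg Z θ))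
    (hocc : ∀ θ ∈ Set.Ici (0:ℝ), occPos Z θ + occNeg Z θ = θ) :
    ∃ Θ Tinv : ℝ → ℝ,
      (∀ t : ℝ, Θ t = (σp ^ 2)⁻¹ * occPos B t + (σm ^ 2)⁻¹ * occNeg B t) ∧
      ContinuousOn Θ (Set.Ici 0) ∧
      StrictMonoOn Θ (Set.Ici 0) ∧
      ContinuousOn Tinv (Set.Ici 0) ∧
      Set.MapsTo Tinv (Set.Ici 0) (Set.Ici 0) ∧
      (∀ t ∈ Set.Ici (0:ℝ), Tinv (Θ t) = t) ∧
      (∀ θ ∈ Set.Ici (0:ℝ), Θ (Tinv θ) = θ) ∧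
      (∀ θ ∈ Set.Ici (0:ℝ), Z θ = B (Tinv θ)) :=
  two_speed_brownian_path_converse_general σp σm hσp.ne' hσm.ne' B Z
    (hZ.aemeasurable measurableSet_Ici) hrep hocc
end

section
/- (Absolute value and local time identities, equations (2.32)–(2.33).) For every (z₊, z₋) ∈ 𝒟 one has |z| = z₊ ∘ p₊ + z₋ ∘ p₋ + Γ(z₊ ∘ p₊ + z₋ ∘ p₋) identically on [0,∞), and moreover Γ(z₊ ∘ p₊ + z₋ ∘ p₋) = λ₊ ∘ p₊ + λ₋ ∘ p₋ = 2 λ₊ ∘ p₊ = 2 λ₋ ∘ p₋. -/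
open Set Filter

/-- The Skorohod map: `Γ(z)(θ) = max(0, sup_{0 ≤ ν ≤ θ} (−z(ν)))`. -/
noncomputable def skorohod (z : ℝ → ℝ) (θ : ℝ) : ℝ :=
  max 0 (sSup ((fun ν => -z ν) '' Set.Icc 0 θ))

/-!
A time `θ` is split as `a + b` so that the local times `λ₊(a)` and `λ₋(b)` agree. As local times
are nondecreasing, their common value depends on `θ` only and is nondecreasing in it. It therefore
bounds `-z₊(p₊ ν)` and `-z₋(p₋ ν)` for `ν ≤ θ`. If it is positive, both bounds are attained at once
when `ν` is the sum of the first times at which `λ₊` and `λ₋` take the value `λ₊(p₊ θ)`. This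
computes `Γ(z₊ ∘ p₊ + z₋ ∘ p₋)`.

If neither `z₊` at `p₊ θ` nor `z₋` at `p₋ θ` were at minus its local time, then `λ₊` would be
constant just after `p₊ θ` and `λ₋` just before `p₋ θ`, so `p₊ θ` could be enlarged. By maximality,
the smaller of `z₊(p₊ θ)` and `z₋(p₋ θ)` is minus the common local time, and the formula for `|z|`
is `|x - y| = x + y - 2 min x y`.
-/

open scoped Topology

section BalancedSplit

variable {T α : Type*}

/-- `(a, b)` splits the time `θ` into two nonnegative parts at which `f` and `g` agree. For the
local times `f = λ₊` and `g = λ₋`, the pairs `(p₊ θ, p₋ θ)` are of this kind. -/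
structure IsBalancedSplit [AddZeroClass T] [LE T] (f g : T → α) (θ a b : T) : Prop where
  left_nonneg : 0 ≤ a
  right_nonneg : 0 ≤ b
  add_eq : a + b = θ
  value_eq : f a = g b

theorem IsBalancedSplit.symm [AddCommMonoid T] [LE T] {f g : T → α} {θ a b : T}
    (h : IsBalancedSplit f g θ a b) : IsBalancedSplit g f θ b a :=
  ⟨h.right_nonneg, h.left_nonneg, add_comm b a ▸ h.add_eq, h.value_eq.symm⟩

theorem IsBalancedSplit.value_le [AddCommMonoid T] [LinearOrder T] [IsOrderedCancelAddMonoid T]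
    [Preorder α] {f g : T → α} (hf : Monotone f) (hg : Monotone g) {θ θ' a b a' b' : T}
    (h : IsBalancedSplit f g θ a b) (h' : IsBalancedSplit f g θ' a' b') (hθ : θ ≤ θ') :
    f a ≤ f a' := by
  rcases le_or_gt a a' with ha | ha
  · exact hf ha
  · have hb : b ≤ b' := by
      by_contra! hb
      exact (add_lt_add ha hb).not_ge (h.add_eq.trans_le (hθ.trans_eq h'.add_eq.symm))
    calc f a = g b := h.value_eq
      _ ≤ g b' := hg hb
      _ = f a' := h'.value_eq.symm

theorem IsBalancedSplit.exists_gt [AddCommGroup T] [LinearOrder T] [IsOrderedAddMonoid T]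
    [PartialOrder α] {f g : T → α} (hf : Monotone f) (hg : Monotone g) {θ a b r s : T}
    (h : IsBalancedSplit f g θ a b) (har : a < r) (hfr : f r = f a)
    (hs : 0 ≤ s) (hsb : s < b) (hgs : g s = g b) :
    ∃ a' > a, ∃ b', IsBalancedSplit f g θ a' b' := by
  obtain ⟨ε, hε, hεr, hεs⟩ : ∃ ε > 0, ε ≤ r - a ∧ ε ≤ b - s :=
    ⟨min (r - a) (b - s), lt_min (sub_pos.2 har) (sub_pos.2 hsb), min_le_left _ _,
      min_le_right _ _⟩
  have ha : a ≤ a + ε := le_add_of_nonneg_right hε.le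
  have hsε : s ≤ b - ε := le_sub_comm.1 hεs
  have hfε : f (a + ε) = f a :=
    le_antisymm (hfr ▸ hf (le_sub_iff_add_le'.1 hεr)) (hf ha)
  have hgε : g (b - ε) = g b :=
    le_antisymm (hg (sub_le_self b hε.le)) (hgs ▸ hg hsε)
  exact ⟨a + ε, lt_add_of_pos_right a hε, b - ε, h.left_nonneg.trans ha, hs.trans hsε,
    (add_add_sub_cancel a b ε).trans h.add_eq, by rw [hfε, hgε, h.value_eq]⟩

variable [AddCommGroup T] [PartialOrder T] [IsOrderedAddMonoid T] {f g : T → α} {θ a b : T}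

theorem isBalancedSplit_sub_iff :
    IsBalancedSplit f g θ a (θ - a) ↔ a ∈ {ν ∈ Icc 0 θ | f ν = g (θ - ν)} :=
  ⟨fun h => ⟨⟨h.left_nonneg, sub_nonneg.1 h.right_nonneg⟩, h.value_eq⟩,
    fun h => ⟨h.1.1, sub_nonneg.2 h.1.2, add_sub_cancel a θ, h.2⟩⟩

theorem IsBalancedSplit.left_mem (h : IsBalancedSplit f g θ a b) :
    a ∈ {ν ∈ Icc 0 θ | f ν = g (θ - ν)} :=
  isBalancedSplit_sub_iff.1 (eq_sub_of_add_eq' h.add_eq ▸ h)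

theorem isBalancedSplit_of_isGreatest_of_isLeast
    (ha : IsGreatest {ν ∈ Icc 0 θ | f ν = g (θ - ν)} a)
    (hb : IsLeast {ν ∈ Icc 0 θ | g ν = f (θ - ν)} b) : IsBalancedSplit f g θ a b := by
  have split_a := isBalancedSplit_sub_iff.2 ha.1
  have split_b := (isBalancedSplit_sub_iff.2 hb.1).symm
  have b_le : b ≤ θ - a := hb.2 split_a.symm.left_mem
  have le_a : θ - b ≤ a := ha.2 split_b.left_mem
  rwa [le_antisymm b_le (sub_le_comm.1 le_a)]

end BalancedSplit

section Skorohod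

variable {z : ℝ → ℝ} {θ : ℝ}

theorem skorohod_nonneg (z : ℝ → ℝ) (θ : ℝ) : 0 ≤ skorohod z θ :=
  le_max_left _ _

theorem skorohod_zero (z : ℝ → ℝ) : skorohod z 0 = max 0 (-z 0) := by
  simp [skorohod]

theorem skorohod_le {c : ℝ} (hc : 0 ≤ c) (h : ∀ ν ∈ Icc 0 θ, -z ν ≤ c) : skorohod z θ ≤ c :=
  max_le hc (Real.sSup_le (forall_mem_image.2 h) hc)

theorem neg_le_skorohod_of_bddAbove (h : BddAbove ((fun ν => -z ν) '' Icc 0 θ)) {ν : ℝ}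
    (hν : ν ∈ Icc 0 θ) : -z ν ≤ skorohod z θ :=
  (le_csSup h (mem_image_of_mem _ hν)).trans (le_max_right _ _)

theorem neg_le_skorohod (hz : LowerSemicontinuousOn z (Ici 0)) {ν : ℝ} (hν : ν ∈ Icc 0 θ) :
    -z ν ≤ skorohod z θ := by
  refine neg_le_skorohod_of_bddAbove ?_ hν
  obtain ⟨m, hm⟩ := (hz.mono Icc_subset_Ici_self).bddBelow_of_isCompact (isCompact_Icc (b := θ))
  exact ⟨-m, forall_mem_image.2 fun ν hν => neg_le_neg (hm (mem_image_of_mem z hν))⟩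

theorem skorohod_mono (hz : LowerSemicontinuousOn z (Ici 0)) : Monotone (skorohod z) :=
  fun _ b hab => skorohod_le (skorohod_nonneg z b) fun _ hν =>
    neg_le_skorohod hz (Icc_subset_Icc_right hab hν)

theorem exists_eq_neg_skorohod (hz : LowerSemicontinuousOn z (Ici 0)) (hpos : 0 < skorohod z θ) :
    ∃ s ∈ Icc 0 θ, z s = -skorohod z θ := by
  have hne : (Icc 0 θ).Nonempty := by
    by_contra! hempty
    exact hpos.not_ge (skorohod_le le_rfl (by simp [hempty]))
  obtain ⟨s, hs, hmin⟩ := (hz.mono Icc_subset_Ici_self).exists_isMinOn hne isCompact_Icc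
  have hle : skorohod z θ ≤ max 0 (-z s) :=
    skorohod_le (le_max_left _ _) fun ν hν => (neg_le_neg (hmin hν)).trans (le_max_right _ _)
  have hle' : skorohod z θ ≤ -z s := (le_max_iff.1 hle).resolve_left hpos.not_ge
  exact ⟨s, hs, by linarith [neg_le_skorohod hz hs]⟩

theorem exists_isLeast_skorohod_eq (hz : LowerSemicontinuousOn z (Ici 0))
    (hpos : 0 < skorohod z θ) :
    ∃ s, IsLeast {t ∈ Ici 0 | skorohod z t = skorohod z θ} s ∧ z s = -skorohod z θ := by
  have hcompact : IsCompact (Icc 0 θ ∩ z ⁻¹' Iic (-skorohod z θ)) :=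
    (hz.mono Icc_subset_Ici_self).isCompact_inter_preimage_Iic isCompact_Icc _
  obtain ⟨u, hu, hzu⟩ := exists_eq_neg_skorohod hz hpos
  obtain ⟨s, ⟨⟨hs0, hsθ⟩, hzs⟩, hleast⟩ := hcompact.exists_isLeast ⟨u, hu, hzu.le⟩
  have hlower : skorohod z θ ≤ -z s := le_neg_of_le_neg hzs
  refine ⟨s, ⟨⟨hs0, ?_⟩, ?_⟩, ?_⟩
  · exact le_antisymm (skorohod_mono hz hsθ)
      (hlower.trans (neg_le_skorohod hz (right_mem_Icc.2 hs0)))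
  · rintro t ⟨-, ht⟩
    obtain ⟨v, ⟨hv0, hvt⟩, hzv⟩ := exists_eq_neg_skorohod hz (ht ▸ hpos)
    rcases le_total v θ with hvθ | hθv
    · exact (hleast ⟨⟨hv0, hvθ⟩, (hzv.trans (congrArg Neg.neg ht)).le⟩).trans hvt
    · exact hsθ.trans (hθv.trans hvt)
  · linarith [neg_le_skorohod hz (⟨hs0, hsθ⟩ : s ∈ Icc 0 θ)]

theorem exists_gt_skorohod_eq (hz : LowerSemicontinuousOn z (Ici 0)) (hθ : 0 ≤ θ)
    (h : -skorohod z θ < z θ) : ∃ r > θ, skorohod z r = skorohod z θ := by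
  have hnear : ∀ᶠ t in 𝓝[≥] θ, -skorohod z θ < z t :=
    (hz θ hθ _ h).filter_mono (nhdsWithin_mono θ (Ici_subset_Ici.2 hθ))
  obtain ⟨r, hr, hsub⟩ := mem_nhdsGE_iff_exists_Icc_subset.1 hnear
  refine ⟨r, hr, le_antisymm ?_ (skorohod_mono hz (mem_Ioi.1 hr).le)⟩
  refine skorohod_le (skorohod_nonneg z θ) fun ν hν => ?_
  rcases le_total ν θ with hνθ | hθν
  · exact neg_le_skorohod hz ⟨hν.1, hνθ⟩
  · exact (neg_lt.1 (hsub ⟨hθν, hν.2⟩)).le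

theorem exists_lt_skorohod_eq (hz : LowerSemicontinuousOn z (Ici 0)) (hθ : 0 < θ)
    (h : -skorohod z θ < z θ) : ∃ s ∈ Ico 0 θ, skorohod z s = skorohod z θ := by
  rcases (skorohod_nonneg z θ).eq_or_lt with hzero | hpos
  · exact ⟨0, ⟨le_rfl, hθ⟩, le_antisymm (skorohod_mono hz hθ.le) (hzero ▸ skorohod_nonneg z 0)⟩
  · obtain ⟨s, ⟨⟨hs0, hs⟩, hleast⟩, hzs⟩ := exists_isLeast_skorohod_eq hz hpos
    have hsθ : s ≠ θ := fun heq => h.ne' (heq ▸ hzs)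
    exact ⟨s, ⟨hs0, (hleast ⟨hθ.le, rfl⟩).lt_of_ne hsθ⟩, hs⟩

end Skorohod

section LocalTime

variable {zp zm : ℝ → ℝ} {θ a b : ℝ}

theorem exists_forall_isBalancedSplit_eq_neg_skorohod
    (hzp : LowerSemicontinuousOn zp (Ici 0)) (hzm : LowerSemicontinuousOn zm (Ici 0))
    (h : IsBalancedSplit (skorohod zp) (skorohod zm) θ a b) (hpos : 0 < skorohod zp a) :
    ∃ ν ∈ Icc 0 θ, ∀ a' b', IsBalancedSplit (skorohod zp) (skorohod zm) ν a' b' →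
      zp a' = -skorohod zp a ∧ zm b' = -skorohod zm b := by
  obtain ⟨s, ⟨⟨hs0, hs⟩, hs_least⟩, hzs⟩ := exists_isLeast_skorohod_eq hzp hpos
  obtain ⟨t, ⟨⟨ht0, ht⟩, ht_least⟩, hzt⟩ := exists_isLeast_skorohod_eq hzm (h.value_eq ▸ hpos)
  have hst : IsBalancedSplit (skorohod zp) (skorohod zm) (s + t) s t :=
    ⟨hs0, ht0, rfl, by rw [hs, ht, h.value_eq]⟩
  have hsa : s ≤ a := hs_least ⟨h.left_nonneg, rfl⟩
  have htb : t ≤ b := ht_least ⟨h.right_nonneg, rfl⟩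
  refine ⟨s + t, ⟨add_nonneg hs0 ht0, (add_le_add hsa htb).trans_eq h.add_eq⟩, fun a' b' h' => ?_⟩
  have hvalue : skorohod zp a' = skorohod zp a :=
    (le_antisymm (h'.value_le (skorohod_mono hzp) (skorohod_mono hzm) hst le_rfl)
      (hst.value_le (skorohod_mono hzp) (skorohod_mono hzm) h' le_rfl)).trans hs
  have hsa' : s ≤ a' := hs_least ⟨h'.left_nonneg, hvalue⟩
  have htb' : t ≤ b' :=
    ht_least ⟨h'.right_nonneg, by rw [← h'.value_eq, hvalue, h.value_eq]⟩
  obtain rfl : a' = s := by linarith [h'.add_eq]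
  obtain rfl : b' = t := by linarith [h'.add_eq]
  exact ⟨hzs, hzt⟩

theorem skorohod_add_comp_eq_two_mul
    (hzp : LowerSemicontinuousOn zp (Ici 0)) (hzm : LowerSemicontinuousOn zm (Ici 0))
    {p q : ℝ → ℝ}
    (hpq : ∀ ν, 0 ≤ ν → IsBalancedSplit (skorohod zp) (skorohod zm) ν (p ν) (q ν)) (hθ : 0 ≤ θ) :
    skorohod (fun ν => zp (p ν) + zm (q ν)) θ = 2 * skorohod zp (p θ) := by
  have hle : ∀ ν ∈ Icc 0 θ, -(zp (p ν) + zm (q ν)) ≤ 2 * skorohod zp (p θ) := by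
    rintro ν ⟨hν0, hνθ⟩
    have hν := hpq ν hν0
    have hmono : skorohod zp (p ν) ≤ skorohod zp (p θ) :=
      hν.value_le (skorohod_mono hzp) (skorohod_mono hzm) (hpq θ hθ) hνθ
    have hp : -zp (p ν) ≤ skorohod zp (p ν) :=
      neg_le_skorohod hzp (right_mem_Icc.2 hν.left_nonneg)
    have hq : -zm (q ν) ≤ skorohod zm (q ν) :=
      neg_le_skorohod hzm (right_mem_Icc.2 hν.right_nonneg)
    linarith [hν.value_eq]
  refine le_antisymm (skorohod_le (mul_nonneg zero_le_two (skorohod_nonneg _ _)) hle) ?_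
  rcases (skorohod_nonneg zp (p θ)).eq_or_lt with hzero | hpos
  · simpa only [← hzero, mul_zero] using skorohod_nonneg _ θ
  · obtain ⟨ν, hν, hattained⟩ :=
      exists_forall_isBalancedSplit_eq_neg_skorohod hzp hzm (hpq θ hθ) hpos
    obtain ⟨hp, hq⟩ := hattained _ _ (hpq ν hν.1)
    calc 2 * skorohod zp (p θ) = -(zp (p ν) + zm (q ν)) := by
          rw [hp, hq, ← (hpq θ hθ).value_eq]; ring
      _ ≤ _ := neg_le_skorohod_of_bddAbove ⟨_, forall_mem_image.2 hle⟩ hν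

theorem min_eq_neg_skorohod_of_forall_left_le
    (hzp : LowerSemicontinuousOn zp (Ici 0)) (hzm : LowerSemicontinuousOn zm (Ici 0))
    (hzm0 : zm 0 ≤ 0) (h : IsBalancedSplit (skorohod zp) (skorohod zm) θ a b)
    (hmax : ∀ a' b', IsBalancedSplit (skorohod zp) (skorohod zm) θ a' b' → a' ≤ a) :
    min (zp a) (zm b) = -skorohod zp a := by
  have hp : -skorohod zp a ≤ zp a :=
    neg_le.1 (neg_le_skorohod hzp (right_mem_Icc.2 h.left_nonneg))
  have hq : -skorohod zp a ≤ zm b :=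
    h.value_eq ▸ neg_le.1 (neg_le_skorohod hzm (right_mem_Icc.2 h.right_nonneg))
  by_contra hne
  obtain ⟨hp_lt, hq_lt⟩ := lt_min_iff.1 ((le_min hp hq).lt_of_ne' hne)
  rw [h.value_eq] at hq_lt
  have hb : 0 < b := by
    refine h.right_nonneg.lt_of_ne fun hb => ?_
    rw [← hb, skorohod_zero, max_eq_right (neg_nonneg.2 hzm0), neg_neg] at hq_lt
    exact hq_lt.false
  obtain ⟨r, har, hr⟩ := exists_gt_skorohod_eq hzp h.left_nonneg hp_lt
  obtain ⟨s, ⟨hs0, hsb⟩, hs⟩ := exists_lt_skorohod_eq hzm hb hq_lt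
  obtain ⟨a', ha', b', h'⟩ :=
    h.exists_gt (skorohod_mono hzp) (skorohod_mono hzm) har hr hs0 hsb hs
  exact (hmax a' b' h').not_gt ha'

end LocalTime

theorem abs_and_local_time_identities_general
    (zp zm : ℝ → ℝ)
    (hzp : LowerSemicontinuousOn zp (Ici 0)) (hzm : LowerSemicontinuousOn zm (Ici 0))
    (hzm0 : zm 0 ≤ 0)
    (pp pm : ℝ → ℝ)
    (hpp : ∀ θ ∈ Ici (0 : ℝ),
      IsGreatest {ν ∈ Icc 0 θ | skorohod zp ν = skorohod zm (θ - ν)} (pp θ))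
    (hpm : ∀ θ ∈ Ici (0 : ℝ),
      IsLeast {ν ∈ Icc 0 θ | skorohod zm ν = skorohod zp (θ - ν)} (pm θ)) :
    ∀ θ ∈ Ici (0 : ℝ),
      |zp (pp θ) - zm (pm θ)| =
        zp (pp θ) + zm (pm θ) + skorohod (fun ν => zp (pp ν) + zm (pm ν)) θ ∧
      skorohod (fun ν => zp (pp ν) + zm (pm ν)) θ =
        skorohod zp (pp θ) + skorohod zm (pm θ) ∧
      skorohod (fun ν => zp (pp ν) + zm (pm ν)) θ = 2 * skorohod zp (pp θ) ∧
      skorohod (fun ν => zp (pp ν) + zm (pm ν)) θ = 2 * skorohod zm (pm θ) := by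
  intro θ hθ
  have hsplit : ∀ ν, 0 ≤ ν → IsBalancedSplit (skorohod zp) (skorohod zm) ν (pp ν) (pm ν) :=
    fun ν hν => isBalancedSplit_of_isGreatest_of_isLeast (hpp ν hν) (hpm ν hν)
  have hlocal : skorohod (fun ν => zp (pp ν) + zm (pm ν)) θ = 2 * skorohod zp (pp θ) :=
    skorohod_add_comp_eq_two_mul hzp hzm hsplit hθ
  have hmin : min (zp (pp θ)) (zm (pm θ)) = -skorohod zp (pp θ) :=
    min_eq_neg_skorohod_of_forall_left_le hzp hzm hzm0 (hsplit θ hθ)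
      fun _ _ h => (hpp θ hθ).2 h.left_mem
  have habs : |zp (pp θ) - zm (pm θ)| =
      zp (pp θ) + zm (pm θ) + skorohod (fun ν => zp (pp ν) + zm (pm ν)) θ := by
    rw [abs_sub_comm, ← max_sub_min_eq_abs, hlocal]
    linarith [min_add_max (zp (pp θ)) (zm (pm θ))]
  rw [← (hsplit θ hθ).value_eq, ← two_mul]
  exact ⟨habs, hlocal, hlocal, hlocal⟩

/-- Absolute value and local time identities (equations (2.32)–(2.33)): with
`z = z₊ ∘ p₊ − z₋ ∘ p₋`, one has
`|z| = z₊ ∘ p₊ + z₋ ∘ p₋ + Γ(z₊ ∘ p₊ + z₋ ∘ p₋)` on `[0,∞)`, and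
`Γ(z₊ ∘ p₊ + z₋ ∘ p₋) = λ₊ ∘ p₊ + λ₋ ∘ p₋ = 2 λ₊ ∘ p₊ = 2 λ₋ ∘ p₋`. -/
theorem abs_and_local_time_identities
    (zp zm : ℝ → ℝ)
    (hzp : ContinuousOn zp (Set.Ici 0)) (hzm : ContinuousOn zm (Set.Ici 0))
    (hzp0 : zp 0 = 0) (hzm0 : zm 0 = 0)
    (hzpinf : Filter.liminf (fun θ => (zp θ : EReal)) Filter.atTop = ⊥)
    (hzminf : Filter.liminf (fun θ => (zm θ : EReal)) Filter.atTop = ⊥)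
    (pp pm : ℝ → ℝ)
    (hpp : ∀ θ ∈ Set.Ici (0:ℝ),
      IsGreatest {ν ∈ Set.Icc 0 θ | skorohod zp ν = skorohod zm (θ - ν)} (pp θ))
    (hpm : ∀ θ ∈ Set.Ici (0:ℝ),
      IsLeast {ν ∈ Set.Icc 0 θ | skorohod zm ν = skorohod zp (θ - ν)} (pm θ)) :
    ∀ θ ∈ Set.Ici (0:ℝ),
      |zp (pp θ) - zm (pm θ)| =
        zp (pp θ) + zm (pm θ) + skorohod (fun ν => zp (pp ν) + zm (pm ν)) θ ∧
      skorohod (fun ν => zp (pp ν) + zm (pm ν)) θ =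
        skorohod zp (pp θ) + skorohod zm (pm θ) ∧
      skorohod (fun ν => zp (pp ν) + zm (pm ν)) θ = 2 * skorohod zp (pp θ) ∧
      skorohod (fun ν => zp (pp ν) + zm (pm ν)) θ = 2 * skorohod zm (pm θ) :=
  abs_and_local_time_identities_general zp zm hzp.lowerSemicontinuousOn
    hzm.lowerSemicontinuousOn hzm0.le pp pm hpp hpm
end
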